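/- Let X be a compact metric space and φ: X → X a homeomorphism. Let x₁, x₂, …, x_q be finitely many points of X, none of which is φ-periodic, whose φ-orbits are pairwise disjoint. For each p ∈ {1, …, q} choose β_p < 0 and an interval J_p that is either (−∞, β_p] or (−∞, β_p). Then there exists a continuous function F: X → ℝ such that: (a) for each p ∈ {1, …, q} and each β ∈ ℝ, there is an e^{βF}-conformal measure concentrated on the φ-orbit {φ^k(x_p) : k ∈ ℤ} of x_p if and only if β ∈ J_p; and (b) ∫_X F dν = 0 for every φ-invariant Borel probability measure ν on X. -/

import Mathlib

open MeasureTheory Filter Topology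

/-- A Borel probability measure `m` is `e^{βF}`-conformal for the homeomorphism `φ` if
`m(φ(B)) = ∫_B e^{βF} dm` for every Borel set `B ⊆ X`. -/
def IsConformalMeasure {X : Type*} [TopologicalSpace X] [MeasurableSpace X]
    (φ : X ≃ₜ X) (F : X → ℝ) (β : ℝ) (m : Measure X) : Prop :=
  IsProbabilityMeasure m ∧
    ∀ B : Set X, MeasurableSet B →
      m ((φ : X → X) '' B) = ∫⁻ x in B, ENNReal.ofReal (Real.exp (β * F x)) ∂m

/-- A measure `ν` is `φ`-invariant if `ν(φ⁻¹(B)) = ν(B)` for all Borel sets `B`. -/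
def IsInvariantMeasure {X : Type*} [TopologicalSpace X] [MeasurableSpace X]
    (φ : X ≃ₜ X) (ν : Measure X) : Prop :=
  ∀ B : Set X, MeasurableSet B → ν ((φ : X → X) ⁻¹' B) = ν B

/-- The (two-sided) `φ`-orbit `{φᵏ(x) : k ∈ ℤ}` of a point `x`. -/
def zOrbit {X : Type*} [TopologicalSpace X] (φ : X ≃ₜ X) (x : X) : Set X :=
  {y : X | ∃ n : ℕ, y = (φ : X → X)^[n] x ∨ y = (φ.symm : X → X)^[n] x}


lemma aux_profile (g : ℕ → ℝ) (hm : Monotone g) (h0 : g 0 = 0)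
    (hinc : Tendsto (fun k => g (k+1) - g k) atTop (𝓝 0)) :
    ∃ (c : ℕ → ℕ → ℝ) (N : ℕ → ℕ) (d : ℕ → ℝ), Summable d ∧ (∀ n k, 0 ≤ c n k) ∧
      (∀ n, c n 0 = 0) ∧ (∀ n k, N n ≤ k → c n k = 0) ∧
      (∀ n k, |c n (k+1) - c n k| ≤ d n) ∧ ∀ k, HasSum (fun n => c n k) (g k) := by
  classical
  obtain ⟨K0, hK0⟩ := hinc.bddAbove_range
  obtain ⟨K, hK, hKpos⟩ : ∃ K, (∀ k, g (k+1) - g k ≤ K) ∧ 0 < K :=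
    ⟨max K0 1, fun k => (hK0 ⟨k, rfl⟩).trans (le_max_left _ _), by positivity⟩
  have hg0 : ∀ k, 0 ≤ g k := fun k => h0 ▸ hm (Nat.zero_le k)
  let e : ℕ → ℝ := fun n => K * (1/2)^n
  have epos : ∀ n, 0 < e n := fun n => by positivity
  have eanti : ∀ n, e (n+1) ≤ e n := fun n => by
    have : (0:ℝ) < K * (1/2)^n := by positivity
    simp only [e, pow_succ]; nlinarith
  have hex : ∀ n, ∃ M, ∀ k, M ≤ k → g (k+1) - g k ≤ e n := fun n =>
    eventually_atTop.1 (hinc.eventually_le_const (epos n))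
  let m : ℕ → ℕ := fun n => Nat.find (hex n)
  have hmspec : ∀ n k, m n ≤ k → g (k+1) - g k ≤ e n := fun n => Nat.find_spec (hex n)
  have hm0 : m 0 = 0 := by
    refine Nat.le_zero.1 (Nat.find_min' (hex 0) ?_)
    intro k _; simpa [e] using hK k
  have hmm : ∀ n, m n ≤ m (n+1) := fun n =>
    Nat.find_min' (hex n) fun k hk => (hmspec (n+1) k hk).trans (eanti n)
  let M : ℕ → ℕ := fun n => m n + n
  have hM0 : M 0 = 0 := by simp [M, hm0]
  have hMM : ∀ n, M n ≤ M (n+1) := fun n => by have := hmm n; simp only [M]; omega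
  have hMspec : ∀ n k, M n ≤ k → g (k+1) - g k ≤ e n := fun n k hk =>
    hmspec n k (by simp only [M] at hk; omega)
  let T : ℕ → ℕ → ℝ := fun n k => max 0 (g (M n) - e n * ((k:ℝ) - M n))
  let G : ℕ → ℕ → ℝ := fun n k => min (g k) (T n k)
  have hGnn : ∀ n k, 0 ≤ G n k := fun n k => le_min (hg0 k) (le_max_left _ _)
  have hGsmall : ∀ n k, k ≤ M n → G n k = g k := by
    intro n k hk
    refine min_eq_left (le_max_of_le_right ?_)
    have h1 : (k:ℝ) ≤ M n := by exact_mod_cast hk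
    have := hm hk
    nlinarith [epos n]
  have hG0 : ∀ k, G 0 k = 0 := by
    intro k
    have : T 0 k = 0 := by
      refine max_eq_left ?_
      rw [hM0, h0]; have := epos 0; have : (0:ℝ) ≤ k := by positivity
      simp; nlinarith
    simp only [G, this]; exact min_eq_right (hg0 k)
  have hGle : ∀ n k, G n k ≤ g k := fun n k => min_le_left _ _
  have hGmono : ∀ n k, G n k ≤ G (n+1) k := by
    intro n k
    rcases le_total k (M (n+1)) with hk | hk
    · rw [hGsmall _ _ hk]; exact hGle _ _
    · refine min_le_min le_rfl (max_le_max le_rfl ?_)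
      have h1 : (M (n+1):ℝ) ≤ k := by exact_mod_cast hk
      have h2 : (M n:ℝ) ≤ M (n+1) := by exact_mod_cast hMM n
      have := hm (hMM n)
      nlinarith [epos n, epos (n+1), eanti n]
  have hGzero : ∀ n, ∃ L, ∀ k, L ≤ k → G n k = 0 := by
    intro n
    obtain ⟨L, hL⟩ := exists_nat_ge (g (M n) / e n + M n)
    refine ⟨L, fun k hk => ?_⟩
    have h1 : (L:ℝ) ≤ k := by exact_mod_cast hk
    have h2 : g (M n) / e n ≤ k - M n := by linarith
    rw [div_le_iff₀ (epos n)] at h2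
    have : T n k = 0 := max_eq_left (by nlinarith)
    simp only [G, this]; exact min_eq_right (hg0 k)
  have hTinc : ∀ n k, |T n (k+1) - T n k| ≤ e n := by
    intro n k
    refine (abs_max_sub_max_le_max _ _ _ _).trans ?_
    have := epos n
    refine max_le (by simpa using this.le) ?_
    rw [abs_le]; push_cast; constructor <;> nlinarith
  have hGinc : ∀ n n' k, e n ≤ e n' → M n' ≤ k → |G n (k+1) - G n k| ≤ e n' := by
    intro n n' k hnn hk
    refine (abs_min_sub_min_le_max _ _ _ _).trans (max_le ?_ ((hTinc n k).trans hnn))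
    rw [abs_of_nonneg (sub_nonneg.2 (hm (Nat.le_succ k)))]
    exact hMspec n' k hk
  choose L hL using hGzero
  refine ⟨fun n k => G (n+1) k - G n k, fun n => max (L n) (L (n+1)), fun n => 2 * e n,
    ?_, ?_, ?_, ?_, ?_, ?_⟩
  · exact (Summable.mul_left _ summable_geometric_two).mul_left _
  · intro n k; exact sub_nonneg.2 (hGmono n k)
  · intro n; simp only []; rw [hGsmall _ _ (Nat.zero_le _), hGsmall _ _ (Nat.zero_le _), sub_self]
  · intro n k hk
    simp only []
    rw [hL _ k ((le_max_left _ _).trans hk), hL _ k ((le_max_right _ _).trans hk), sub_self]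
  · intro n k
    simp only []
    rcases Nat.lt_or_ge k (M n) with hk | hk
    · rw [hGsmall n k hk.le, hGsmall n (k+1) hk, hGsmall (n+1) k (hk.le.trans (hMM n)),
        hGsmall (n+1) (k+1) (hk.trans_le (hMM n))]
      simpa using (epos n).le
    · have h1 := hGinc (n+1) n k (eanti n) hk
      have h2 := hGinc n n k le_rfl hk
      rw [abs_le] at *
      constructor <;> linarith [h1.1, h1.2, h2.1, h2.2]
  · intro k
    rw [hasSum_iff_tendsto_nat_of_nonneg (fun n => sub_nonneg.2 (hGmono n k))]
    refine tendsto_const_nhds.congr' ?_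
    filter_upwards [eventually_ge_atTop k] with n hn
    rw [Finset.sum_range_sub (fun n => G n k), hG0, hGsmall n k (by simp only [M]; omega), sub_zero]

lemma aux_g0 (cl : Bool) : ∃ g : ℕ → ℝ, Monotone g ∧ g 0 = 0 ∧
    Tendsto (fun k => g (k+1) - g k) atTop (𝓝 0) ∧
    ∀ s : ℝ, 0 < s → (Summable (fun k => Real.exp (-s * g k)) ↔
      (if cl then 1 ≤ s else 1 < s)) := by
  have hlogmono : Monotone (fun k : ℕ => Real.log ((k:ℝ)+1)) := by
    intro a b hab
    refine Real.log_le_log (by positivity) (by have : (a:ℝ) ≤ b := by exact_mod_cast hab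
                                               linarith)
  have hlog0 : ∀ k : ℕ, 0 ≤ Real.log ((k:ℝ)+1) := fun k => Real.log_nonneg (by simp)
  have hloginc : Tendsto (fun k : ℕ => Real.log (((k+1:ℕ):ℝ)+1) - Real.log ((k:ℝ)+1)) atTop (𝓝 0) := by
    have h1 : ∀ k : ℕ, Real.log (((k+1:ℕ):ℝ)+1) - Real.log ((k:ℝ)+1) ≤ 1 / ((k:ℝ)+1) := by
      intro k
      rw [← Real.log_div (by positivity) (by positivity)]
      refine (Real.log_le_sub_one_of_pos (by positivity)).trans (le_of_eq ?_)
      push_cast; field_simp; ring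
    exact squeeze_zero (fun k => sub_nonneg.2 (hlogmono (Nat.le_succ k))) h1
      tendsto_one_div_add_atTop_nhds_zero_nat
  have hexp : ∀ (s : ℝ) (k : ℕ), Real.exp (-s * Real.log ((k:ℝ)+1)) = 1 / ((k+1:ℕ):ℝ)^s := by
    intro s k
    rw [Real.rpow_def_of_pos (by positivity), one_div, ← Real.exp_neg]
    push_cast; ring_nf
  have hsum1 : ∀ s : ℝ, Summable (fun k : ℕ => Real.exp (-s * Real.log ((k:ℝ)+1))) ↔ 1 < s := by
    intro s
    simp_rw [hexp]
    rw [summable_nat_add_iff (f := fun k : ℕ => 1 / (k:ℝ)^s) 1]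
    exact Real.summable_one_div_nat_rpow
  cases cl with
  | false =>
    refine ⟨fun k => Real.log ((k:ℝ)+1), hlogmono, by simp, hloginc, fun s _ => ?_⟩
    simpa using hsum1 s
  | true =>
    let l : ℕ → ℝ := fun k => Real.log ((k:ℝ)+1)
    have hll : Monotone (fun k => Real.log (1 + l k)) := fun a b hab =>
      Real.log_le_log (by linarith [hlog0 a]) (by linarith [hlogmono hab])
    have hg : Monotone (fun k => l k + 2 * Real.log (1 + l k)) := fun a b hab => by
      have := hll hab; have := hlogmono hab; simp only [l] at *; linarith
    have hl1 : Summable (fun k => Real.exp (-1 * (l k + 2 * Real.log (1 + l k)))) := by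
      have key : ∀ k, Real.exp (-1 * (l k + 2 * Real.log (1 + l k)))
          = (fun k : ℕ => 1 / ((k:ℝ) * (1 + Real.log k)^2)) (k+1) := by
        intro k
        have h1 : 0 < 1 + l k := by linarith [hlog0 k]
        have h3 : 2 * Real.log (1 + l k) = Real.log ((1+l k)^2) := by rw [Real.log_pow]; norm_num
        rw [h3]
        simp only [l] at *
        rw [← Real.log_mul (by positivity) (by positivity), neg_one_mul, Real.exp_neg,
          Real.exp_log (by positivity), one_div]
        push_cast; rfl
      simp_rw [key]
      rw [summable_nat_add_iff (f := fun k : ℕ => 1 / ((k:ℝ) * (1 + Real.log k)^2)) 1]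
      rw [← summable_condensed_iff_of_nonneg]
      · have h2 : ∀ k : ℕ, (2:ℝ)^k * (1 / (((2^k:ℕ):ℝ) * (1 + Real.log ((2^k:ℕ):ℝ))^2))
            = 1 / (1 + k * Real.log 2)^2 := by
          intro k
          push_cast
          rw [Real.log_pow]; field_simp
        simp_rw [h2]
        refine Summable.of_nonneg_of_le (fun k => by positivity) (fun k => ?_)
          (((summable_nat_add_iff 1).2 (Real.summable_one_div_nat_pow (p := 2).2 (by norm_num))).mul_left 4)
        have := Real.log_two_gt_d9
        rw [mul_one_div, div_le_div_iff₀ (by positivity) (by positivity)]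
        have hk : (0:ℝ) ≤ k := by positivity
        push_cast
        have : ((k:ℝ)+1) ≤ 2 * (1 + k * Real.log 2) := by nlinarith
        nlinarith
      · intro n; positivity
      · intro a b ha hab
        have ha' : (0:ℝ) < a := by exact_mod_cast ha
        have hab' : (a:ℝ) ≤ b := by exact_mod_cast hab
        have h1 : 0 ≤ Real.log a := Real.log_natCast_nonneg a
        have := Real.log_le_log ha' hab'
        gcongr
    refine ⟨fun k => l k + 2 * Real.log (1 + l k), hg, by simp [l], ?_, fun s hs => ?_⟩
    · have : Tendsto (fun k : ℕ => 3 * (l (k+1) - l k)) atTop (𝓝 0) := by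
        have h := hloginc.const_mul 3
        rw [mul_zero] at h
        exact h
      refine squeeze_zero (fun k => sub_nonneg.2 (hg (Nat.le_succ k))) (fun k => ?_) this
      have h1 : 0 ≤ l k := hlog0 k
      have h2 : l k ≤ l (k+1) := hlogmono (Nat.le_succ k)
      have h3 : 0 ≤ l (k+1) := h1.trans h2
      have : Real.log (1 + l (k+1)) - Real.log (1 + l k) ≤ l (k+1) - l k := by
        rw [← Real.log_div (by positivity) (by positivity)]
        refine (Real.log_le_sub_one_of_pos (by positivity)).trans ?_
        rw [div_sub_one (by positivity), div_le_iff₀ (by positivity)]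
        nlinarith
      linarith
    · simp only [if_true]
      constructor
      · intro h
        by_contra hs1
        push Not at hs1
        obtain ⟨ε, hε, hε1, hεs⟩ : ∃ ε : ℝ, 0 < ε ∧ ε ≤ 1 ∧ s * (1 + 2 * ε) ≤ 1 := by
          refine ⟨(1 - s)/2, by linarith, by linarith, by nlinarith⟩
        have hbound : ∀ k, Real.log (1 + l k) ≤ ε * l k - Real.log ε := by
          intro k
          have h1 : 0 ≤ l k := hlog0 k
          have : Real.log (1 + l k) + Real.log ε ≤ ε * l k := by
            rw [← Real.log_mul (by positivity) (by positivity)]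
            refine (Real.log_le_sub_one_of_pos (by positivity)).trans ?_
            nlinarith
          linarith
        have hs' : Summable (fun k => Real.exp (-1 * l k)) := by
          refine Summable.of_nonneg_of_le (fun k => (Real.exp_pos _).le) (fun k => ?_)
            (h.mul_left (Real.exp (-(2 * s * Real.log ε))))
          rw [← Real.exp_add]
          refine Real.exp_le_exp.2 ?_
          have h1 : 0 ≤ l k := hlog0 k
          have := hbound k
          nlinarith [mul_le_mul_of_nonneg_left this hs.le, mul_le_mul_of_nonneg_right hεs h1]
        exact lt_irrefl _ ((hsum1 1).1 hs')
      · intro h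
        refine Summable.of_nonneg_of_le (fun k => (Real.exp_pos _).le) (fun k => ?_) hl1
        refine Real.exp_le_exp.2 ?_
        have h1 : 0 ≤ l k := hlog0 k
        have h2 : 0 ≤ Real.log (1 + l k) := Real.log_nonneg (by linarith)
        nlinarith

lemma aux_g (b : ℝ) (hb : b < 0) (cl : Bool) : ∃ g : ℕ → ℝ, Monotone g ∧ g 0 = 0 ∧
    Tendsto (fun k => g (k+1) - g k) atTop (𝓝 0) ∧
    ∀ β : ℝ, β < 0 → (Summable (fun k => Real.exp (β * g k)) ↔
      β ∈ (if cl then Set.Iic b else Set.Iio b)) := by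
  obtain ⟨g, h1, h2, h3, h4⟩ := aux_g0 cl
  refine ⟨fun k => (-b)⁻¹ * g k, ?_, by simp [h2], ?_, ?_⟩
  · exact h1.const_mul (by simpa using hb.le)
  · simpa [mul_sub] using h3.const_mul ((-b)⁻¹)
  · intro β hβ
    have := h4 (β / b) (div_pos_of_neg_of_neg hβ hb)
    convert this using 1
    · have hk : ∀ k, β * ((-b)⁻¹ * g k) = -(β / b) * g k := fun k => by
        have := hb.ne
        field_simp
      simp only [hk]
    · cases cl <;> simp [le_div_iff_of_neg hb, lt_div_iff_of_neg hb]

lemma aux_abel (e : ℕ → ℝ) (he : Antitone e) (d : ℕ → ℝ)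
    (hd : ∀ L, 0 ≤ ∑ k ∈ Finset.range L, d k) (L : ℕ) :
    (∑ k ∈ Finset.range (L+1), d k) * e L ≤ ∑ k ∈ Finset.range (L+1), d k * e k := by
  induction L with
  | zero => simp
  | succ L ih =>
    rw [Finset.sum_range_succ (fun k => d k * e k), Finset.sum_range_succ, add_mul]
    have := mul_le_mul_of_nonneg_left (he (Nat.le_succ L)) (hd (L+1))
    linarith

open Classical in
/-- Divergence survives restriction to a set of lower density at least one half. -/
lemma aux_div (e : ℕ → ℝ) (he : Antitone e) (hpos : ∀ k, 0 ≤ e k) (A : Set ℕ)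
    (hA : ∀ L, L ≤ 2 * ((Finset.range L).filter (· ∈ A)).card) (C : ℝ)
    (hC : ∀ L, ∑ k ∈ (Finset.range L).filter (· ∈ A), e k ≤ C) : Summable e := by
  refine summable_of_sum_range_le (c := 2 * C) hpos fun L => ?_
  rcases L with _ | L
  · have := hC 0; simp at this ⊢; exact this
  have key := aux_abel e he (fun k => (if k ∈ A then 2 else 0) - 1) (fun L => by
    rw [Finset.sum_sub_distrib, ← Finset.sum_filter]
    have := hA L
    simp
    have h : (L:ℝ) ≤ 2 * (((Finset.range L).filter (· ∈ A)).card : ℝ) := by exact_mod_cast this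
    linarith) L
  have h0 : 0 ≤ (∑ k ∈ Finset.range (L+1), ((if k ∈ A then (2:ℝ) else 0) - 1)) * e L := by
    refine mul_nonneg ?_ (hpos L)
    rw [Finset.sum_sub_distrib, ← Finset.sum_filter]
    have := hA (L+1)
    simp only [Finset.sum_const, Finset.card_range, nsmul_eq_mul]
    have h : ((L+1:ℕ):ℝ) ≤ 2 * (((Finset.range (L+1)).filter (· ∈ A)).card : ℝ) := by exact_mod_cast this
    linarith
  have h1 : ∑ k ∈ Finset.range (L+1), ((if k ∈ A then (2:ℝ) else 0) - 1) * e k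
      = 2 * ∑ k ∈ (Finset.range (L+1)).filter (· ∈ A), e k - ∑ k ∈ Finset.range (L+1), e k := by
    rw [Finset.sum_filter, Finset.mul_sum, ← Finset.sum_sub_distrib]
    refine Finset.sum_congr rfl fun k _ => ?_
    split_ifs <;> ring
  have := hC (L+1)
  linarith

lemma aux_tower {X : Type*} [MetricSpace X] (φ : X ≃ₜ X) {q : ℕ} (x : Fin q → X)
    (hinj : ∀ p p' (i j : ℤ), (φ^i) (x p) = (φ^j) (x p') → p = p' ∧ i = j) (R : ℤ) :
    ∃ u : Fin q → X → ℝ, (∀ p, Continuous (u p)) ∧ (∀ p y, 0 ≤ u p y) ∧ (∀ p y, u p y ≤ 1) ∧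
      (∀ p, u p (x p) = 1) ∧
      ∀ y p p' (i j : ℤ), |i| ≤ R → |j| ≤ R → u p ((φ^(-i)) y) ≠ 0 → u p' ((φ^(-j)) y) ≠ 0 →
        p = p' ∧ i = j := by
  classical
  let S : Set X := ⋃ p, ⋃ i ∈ Set.Icc (-R) R, {(φ^i) (x p)}
  have hS : S.Finite := Set.finite_iUnion fun p =>
    (Set.finite_Icc (-R) R).biUnion fun i _ => Set.finite_singleton _
  obtain ⟨V, hV, hdis⟩ := hS.t2_separation
  let U : Fin q → Set X := fun p => ⋂ i ∈ Set.Icc (-R) R, (φ^i) ⁻¹' (V ((φ^i) (x p)))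
  have hUo : ∀ p, IsOpen (U p) := fun p => (Set.finite_Icc (-R) R).isOpen_biInter fun i _ =>
    (hV _).2.preimage (φ^i).continuous
  have hUx : ∀ p, x p ∈ U p := fun p => Set.mem_iInter₂.2 fun i _ => (hV _).1
  have hu : ∀ p, ∃ f : C(X, ℝ), Set.EqOn f 0 (U p)ᶜ ∧ Set.EqOn f 1 {x p} ∧
      ∀ y, f y ∈ Set.Icc (0:ℝ) 1 := fun p =>
    exists_continuous_zero_one_of_isClosed (hUo p).isClosed_compl isClosed_singleton
      (by simpa using hUx p)
  choose f hf0 hf1 hf using hu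
  refine ⟨fun p => f p, fun p => (f p).continuous, fun p y => (hf p y).1, fun p y => (hf p y).2,
    fun p => hf1 p rfl, ?_⟩
  have hmem : ∀ y p (i : ℤ), |i| ≤ R → f p ((φ^(-i)) y) ≠ 0 → y ∈ V ((φ^i) (x p)) := by
    intro y p i hi h
    have h1 : (φ^(-i)) y ∈ U p := by
      by_contra hc; exact h (hf0 p hc)
    have h2 := Set.mem_iInter₂.1 h1 i (by rw [abs_le] at hi; exact hi)
    rwa [Set.mem_preimage, ← Homeomorph.mul_apply, ← zpow_add, add_neg_cancel, zpow_zero] at h2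
  intro y p p' i j hi hj h h'
  have hm := hmem y p i hi h
  have hm' := hmem y p' j hj h'
  apply hinj
  by_contra hne
  have hSm : ∀ p (i : ℤ), |i| ≤ R → (φ^i) (x p) ∈ S := fun p i hi =>
    Set.mem_iUnion.2 ⟨p, Set.mem_iUnion₂.2 ⟨i, abs_le.1 hi, rfl⟩⟩
  exact Set.disjoint_left.1 (hdis (hSm p i hi) (hSm p' j hj) hne) hm hm'

lemma aux_stage {X : Type*} [MetricSpace X] (φ : X ≃ₜ X) {q : ℕ} (x : Fin q → X)
    (hinj : ∀ p p' (i j : ℤ), (φ^i) (x p) = (φ^j) (x p') → p = p' ∧ i = j)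
    (c : Fin q → ℕ → ℝ) (hc : ∀ p k, 0 ≤ c p k) (N : ℕ)
    (hN : ∀ p k, N ≤ k → c p k = 0) (d : ℝ) (hd0 : 0 ≤ d)
    (hd : ∀ p k, |c p (k+1) - c p k| ≤ d) (Q : ℕ) :
    ∃ h : X → ℝ, Continuous h ∧ (∀ y, |h (φ y) - h y| ≤ d) ∧
      (∀ p (k : ℤ), |k| ≤ Q → h ((φ^k) (x p)) = c p k.natAbs) ∧
      (∀ p (k : ℤ), c p k.natAbs ≤ h ((φ^k) (x p))) ∧
      (∀ p L, Q * ((Finset.range L).filter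
        (fun k : ℕ => h ((φ^(k:ℤ)) (x p)) ≠ c p k)).card ≤ L) := by
  classical
  obtain ⟨R, hR⟩ : ∃ R : ℤ, R = (2 * N + 1) * (Q + 1) + 2 := ⟨_, rfl⟩
  have hRQ : (2 * N + 1) * Q + 2 * N + 2 ≤ R := by rw [hR]; linarith
  have hNQ : (0:ℤ) ≤ N * Q := by positivity
  have hRQ' : (Q:ℤ) + 2 * N + 2 ≤ R := by nlinarith
  obtain ⟨u, huc, hu0, hu1, hux, hu⟩ := aux_tower φ x hinj R
  let h : X → ℝ := fun y => ∑ p, ∑ k ∈ Finset.Icc (-N:ℤ) N, c p k.natAbs * u p ((φ^(-k)) y)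
  have hval : ∀ y p (k : ℤ), |k| ≤ R → u p ((φ^(-k)) y) ≠ 0 →
      h y = c p k.natAbs * u p ((φ^(-k)) y) := by
    intro y p k hk hne
    have hz : ∀ p' (j : ℤ), j ∈ Finset.Icc (-N:ℤ) N → (p' ≠ p ∨ j ≠ k) → u p' ((φ^(-j)) y) = 0 := by
      intro p' j hj hor
      by_contra hcon
      rw [Finset.mem_Icc] at hj
      have := hu y p' p j k (abs_le.2 ⟨by linarith [hj.1], by linarith [hj.2]⟩) hk hcon hne
      tauto
    simp only [h]
    rw [Finset.sum_eq_single p]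
    · by_cases hkN : k ∈ Finset.Icc (-N:ℤ) N
      · rw [Finset.sum_eq_single k]
        · intro j hj hjk; rw [hz p j hj (Or.inr hjk), mul_zero]
        · intro hcon; exact absurd hkN hcon
      · rw [Finset.sum_eq_zero, hN p k.natAbs, zero_mul]
        · rw [Finset.mem_Icc] at hkN; omega
        · intro j hj
          rw [hz p j hj (Or.inr (by rintro rfl; exact hkN hj)), mul_zero]
    · intro p' _ hp'
      exact Finset.sum_eq_zero fun j hj => by rw [hz p' j hj (Or.inl hp'), mul_zero]
    · simp
  have hex : ∀ y, h y ≠ 0 → ∃ p, ∃ k : ℤ, |k| ≤ N ∧ u p ((φ^(-k)) y) ≠ 0 := by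
    intro y hy
    by_contra! hcon
    apply hy
    refine Finset.sum_eq_zero fun p _ => Finset.sum_eq_zero fun k hk => ?_
    rw [hcon p k (abs_le.2 (Finset.mem_Icc.1 hk)), mul_zero]
  have hnn : ∀ y, 0 ≤ h y := fun y =>
    Finset.sum_nonneg fun p _ => Finset.sum_nonneg fun k _ => mul_nonneg (hc _ _) (hu0 _ _)
  have hcz : ∀ p (k : ℤ), |c p (k+1).natAbs - c p k.natAbs| ≤ d := by
    intro p k
    rcases le_or_gt 0 k with hk | hk
    · have : (k+1).natAbs = k.natAbs + 1 := by omega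
      rw [this]; exact hd _ _
    · have : k.natAbs = (k+1).natAbs + 1 := by omega
      rw [this, abs_sub_comm]; exact hd _ _
  have hpow : ∀ (i j : ℤ) y, (φ^i) ((φ^j) y) = (φ^(i+j)) y := fun i j y => by
    rw [← Homeomorph.mul_apply, ← zpow_add]
  have hpow1 : ∀ (i : ℤ) y, (φ^i) (φ y) = (φ^(i+1)) y := fun i y => by
    have := hpow i 1 y; rwa [zpow_one] at this
  have hexact : ∀ p (k : ℤ), |k| ≤ R → h ((φ^k) (x p)) = c p k.natAbs := by
    intro p k hk
    have h1 : u p ((φ^(-k)) ((φ^k) (x p))) = 1 := by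
      rw [hpow, neg_add_cancel, zpow_zero]; exact hux p
    have := hval ((φ^k) (x p)) p k hk (by rw [h1]; norm_num)
    rw [this, h1, mul_one]
  refine ⟨h, ?_, ?_, ?_, ?_, ?_⟩
  · exact continuous_finsetSum _ fun p _ => continuous_finsetSum _ fun k _ =>
      continuous_const.mul ((huc p).comp (φ^(-k)).continuous)
  · intro y
    have main : ∀ p (k : ℤ), |k| ≤ N + 1 → u p ((φ^(-k)) y) ≠ 0 → |h (φ y) - h y| ≤ d := by
      intro p k hk hne
      have e0 : (φ^(-(k+1))) (φ y) = (φ^(-k)) y := by rw [hpow1]; congr 2; ring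
      rw [hval y p k (by linarith) hne, hval (φ y) p (k+1) (by rw [abs_le] at *; omega)
        (by rw [e0]; exact hne), e0, ← sub_mul, abs_mul, abs_of_nonneg (hu0 _ _)]
      exact (mul_le_of_le_one_right (abs_nonneg _) (hu1 _ _)).trans (hcz p k)
    by_cases h1 : h y = 0
    · by_cases h2 : h (φ y) = 0
      · simpa [h1, h2] using hd0
      · obtain ⟨p, k, hk, hne⟩ := hex _ h2
        refine main p (k-1) (by rw [abs_le] at *; omega) ?_
        rw [hpow1] at hne
        convert hne using 4; ring
    · obtain ⟨p, k, hk, hne⟩ := hex _ h1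
      exact main p k (by linarith) hne
  · intro p k hk
    exact hexact p k (by linarith)
  · intro p k
    by_cases hk : |k| ≤ R
    · exact (hexact p k hk).ge
    · rw [hN p k.natAbs (by rw [Int.abs_eq_natAbs] at hk; omega)]; exact hnn _
  · intro p L
    -- bad times
    have hbad : ∀ k : ℕ, h ((φ^(k:ℤ)) (x p)) ≠ c p k → R < k ∧
        ∃ v j : ℤ, |j| ≤ N ∧ (k:ℤ) = v + j ∧ ∃ p', u p' ((φ^v) (x p)) ≠ 0 := by
      intro k hk
      have hkR : R < k := by
        by_contra hcon
        exact hk (hexact p k (by rw [abs_le]; omega))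
      refine ⟨hkR, ?_⟩
      rw [hN p k (by omega)] at hk
      obtain ⟨p', j, hj, hne⟩ := hex _ hk
      rw [hpow] at hne
      exact ⟨k - j, j, hj, by ring, p', by convert hne using 4; ring⟩
    have hsep : ∀ v v' : ℤ, ∀ p' p'', u p' ((φ^v) (x p)) ≠ 0 → u p'' ((φ^v') (x p)) ≠ 0 →
        |v - v'| ≤ R → v = v' := by
      intro v v' p' p'' h1 h2 hv
      have := (hu ((φ^v) (x p)) p' p'' 0 (v - v') (by simp; omega) hv (by simpa using h1)
        (by rw [hpow]; convert h2 using 4; ring)).2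
      omega
    suffices hs : (Finset.range Q ×ˢ (Finset.range L).filter
        (fun k : ℕ => h ((φ^(k:ℤ)) (x p)) ≠ c p k)).card ≤ (Finset.range L).card by
      rwa [Finset.card_product, Finset.card_range, Finset.card_range] at hs
    refine Finset.card_le_card_of_injOn (t := Finset.range L)
      (fun ik : ℕ × ℕ => ik.2 - (2 * N + 1) * ik.1) ?_ ?_
    · rintro ⟨i, k⟩ hik
      simp only [Finset.coe_product, Set.mem_prod, Finset.mem_coe, Finset.mem_range,
        Finset.mem_filter] at hik ⊢
      omega
    · rintro ⟨i, k⟩ hik ⟨i', k'⟩ hik' heq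
      simp only [Finset.coe_product, Set.mem_prod, Finset.mem_coe, Finset.mem_range,
        Finset.mem_filter] at hik hik' heq
      obtain ⟨hkR, v, j, hj, hkv, p', hv⟩ := hbad k hik.2.2
      obtain ⟨hkR', v', j', hj', hkv', p'', hv'⟩ := hbad k' hik'.2.2
      have hi : (2 * (N:ℤ) + 1) * i ≤ (2 * N + 1) * Q := by
        have : (i:ℤ) ≤ Q := by exact_mod_cast hik.1.le
        exact mul_le_mul_of_nonneg_left this (by positivity)
      have hi' : (2 * (N:ℤ) + 1) * i' ≤ (2 * N + 1) * Q := by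
        have : (i':ℤ) ≤ Q := by exact_mod_cast hik'.1.le
        exact mul_le_mul_of_nonneg_left this (by positivity)
      have hi0 : 0 ≤ (2 * (N:ℤ) + 1) * i := by positivity
      have hi0' : 0 ≤ (2 * (N:ℤ) + 1) * i' := by positivity
      have heqZ : (k:ℤ) - (2 * (N:ℤ) + 1) * i = k' - (2 * (N:ℤ) + 1) * i' := by
        have b1 : (2 * N + 1) * i ≤ k := by zify; linarith
        have b2 : (2 * N + 1) * i' ≤ k' := by zify; linarith
        zify [b1, b2] at heq
        exact heq
      rw [abs_le] at hj hj'
      have hvv : v = v' := hsep v v' p' p'' hv hv' (by rw [abs_le]; constructor <;> linarith)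
      have hii : (i:ℤ) = i' := by
        have h3 : (2 * (N:ℤ) + 1) * (i - i') = j - j' := by linarith
        have hlt : ∀ t : ℤ, 1 ≤ t → 2 * (N:ℤ) + 1 ≤ (2 * (N:ℤ) + 1) * t := fun t ht =>
          le_mul_of_one_le_right (by positivity) ht
        rcases lt_trichotomy (i:ℤ) i' with hlt' | h | hlt'
        · have := hlt (i' - i) (by omega); linarith
        · exact h
        · have := hlt (i - i') (by omega); linarith
      have : i = i' := by exact_mod_cast hii
      subst this
      have : (k:ℤ) = k' := by linarith
      simp; exact_mod_cast this

open Classical in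
lemma aux_F {X : Type*} [MetricSpace X] [CompactSpace X]
    [MeasurableSpace X] [BorelSpace X] (φ : X ≃ₜ X) {q : ℕ} (x : Fin q → X)
    (hinj : ∀ p p' (i j : ℤ), (φ^i) (x p) = (φ^j) (x p') → p = p' ∧ i = j)
    (g : Fin q → ℕ → ℝ) (hm : ∀ p, Monotone (g p)) (h0 : ∀ p, g p 0 = 0)
    (hinc : ∀ p, Tendsto (fun k => g p (k+1) - g p k) atTop (𝓝 0)) :
    ∃ F : X → ℝ, Continuous F ∧
      (∀ ν : Measure X, IsProbabilityMeasure ν → IsInvariantMeasure φ ν → ∫ y, F y ∂ν = 0) ∧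
      ∀ p, ∃ H : ℤ → ℝ, H 0 = 0 ∧ (∀ k, H (k+1) = H k + F ((φ^k) (x p))) ∧
        (∀ k, g p k.natAbs ≤ H k) ∧ ∃ A : Set ℕ,
          (∀ L, L ≤ 2 * ((Finset.range L).filter (· ∈ A)).card) ∧ ∀ k ∈ A, H k = g p k := by
  choose c N d hds hc0 hcz hcN hcd hcs using fun p => aux_profile (g p) (hm p) (h0 p) (hinc p)
  have hdn : ∀ p n, 0 ≤ d p n := fun p n => (abs_nonneg _).trans (hcd p n 0)
  let D : ℕ → ℝ := fun n => ∑ p, d p n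
  have hD : Summable D := summable_sum fun p _ => hds p
  have hst := fun n => aux_stage φ x hinj (fun p => c p n) (fun p k => hc0 p n k)
    (Finset.univ.sup fun p => N p n)
    (fun p k hk => hcN p n k ((Finset.le_sup (f := fun p => N p n) (Finset.mem_univ p)).trans hk))
    (D n) (Finset.sum_nonneg fun p _ => hdn p n)
    (fun p k => (hcd p n k).trans
      (Finset.single_le_sum (f := fun p => d p n) (fun p _ => hdn p n) (Finset.mem_univ p)))
    (2^(n+2))
  choose h hhc hhd hhe hhl hhb using hst
  have hfs : ∀ y, Summable (fun n => h n (φ y) - h n y) := fun y =>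
    Summable.of_norm_bounded hD fun n => hhd n y
  refine ⟨fun y => ∑' n, (h n (φ y) - h n y), ?_, ?_, ?_⟩
  · exact continuous_tsum (fun n => ((hhc n).comp φ.continuous).sub (hhc n)) hD fun n y => hhd n y
  · intro ν hν hinv
    have hcont : ∀ n, Continuous fun y => h n (φ y) - h n y :=
      fun n => ((hhc n).comp φ.continuous).sub (hhc n)
    have hint : ∀ f : X → ℝ, Continuous f → Integrable f ν := fun f hf =>
      hf.integrable_of_hasCompactSupport (HasCompactSupport.of_compactSpace f)
    have hmp : MeasurePreserving φ ν ν := by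
      refine ⟨φ.continuous.measurable, ?_⟩
      ext B hB
      rw [Measure.map_apply φ.continuous.measurable hB]
      exact hinv B hB
    rw [← integral_tsum_of_summable_integral_norm (fun n => hint _ (hcont n))]
    · have : ∀ n, ∫ y, (h n (φ y) - h n y) ∂ν = 0 := by
        intro n
        rw [integral_sub (f := fun y => h n (φ y)) (hint _ ((hhc n).comp φ.continuous))
            (hint _ (hhc n)),
          hmp.integral_comp φ.measurableEmbedding, sub_self]
      simp [this]
    · refine Summable.of_nonneg_of_le (fun n => integral_nonneg fun y => norm_nonneg _)
        (fun n => ?_) hD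
      have := integral_mono (hint _ (hcont n).norm) (integrable_const (D n)) (fun y => hhd n y)
      simpa using this
  · intro p
    have hsum : ∀ k : ℤ, Summable (fun n => h n ((φ^k) (x p))) := by
      intro k
      rw [← summable_nat_add_iff k.natAbs]
      have h1 := (summable_nat_add_iff k.natAbs).2 (hcs p k.natAbs).summable
      refine h1.congr fun n => (hhe _ p k ?_).symm
      have : n + k.natAbs < 2^(n + k.natAbs) := Nat.lt_two_pow_self
      have h2 : 2^(n + k.natAbs) ≤ 2^(n + k.natAbs + 2) := Nat.pow_le_pow_right (by norm_num) (by omega)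
      rw [Int.abs_eq_natAbs]
      exact_mod_cast (by omega : k.natAbs ≤ 2^(n + k.natAbs + 2))
    refine ⟨fun k => ∑' n, h n ((φ^k) (x p)), ?_, ?_, ?_, ?_⟩
    · have : ∀ n, h n ((φ^(0:ℤ)) (x p)) = 0 := fun n => by
        rw [hhe n p 0 (by simp)]; exact hcz p n
      simp only [this, tsum_zero]
    · intro k
      have e1 : φ ((φ^k) (x p)) = (φ^(k+1)) (x p) := by
        rw [add_comm, zpow_add, zpow_one, Homeomorph.mul_apply]
      simp only [e1]
      rw [(hsum (k+1)).tsum_sub (hsum k)]; ring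
    · intro k
      rw [← (hcs p k.natAbs).tsum_eq]
      exact (hcs p k.natAbs).summable.tsum_le_tsum (fun n => hhl n p k) (hsum k)
    · refine ⟨{k | ∀ n, h n ((φ^(k:ℤ)) (x p)) = c p n k}, ?_, ?_⟩
      · intro L
        have hpart := Finset.card_filter_add_card_filter_not (s := Finset.range L)
          (fun k => k ∈ {k : ℕ | ∀ n, h n ((φ^(k:ℤ)) (x p)) = c p n k})
        rw [Finset.card_range] at hpart
        let B : ℕ → Finset ℕ := fun n => (Finset.range L).filter
          (fun k : ℕ => h n ((φ^(k:ℤ)) (x p)) ≠ c p n k)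
        have hBc : ∀ n, 2^(n+2) * (B n).card ≤ L := fun n => by
          have := hhb n p L
          convert this
        have hsub : (Finset.range L).filter
            (fun k => ¬ (k ∈ {k : ℕ | ∀ n, h n ((φ^(k:ℤ)) (x p)) = c p n k})) ⊆
            (Finset.range L).biUnion B := by
          intro k hk
          simp only [Finset.mem_filter, Set.mem_ofPred_eq, not_forall] at hk
          obtain ⟨hkL, n, hn⟩ := hk
          have hkB : k ∈ B n := Finset.mem_filter.2 ⟨hkL, hn⟩
          refine Finset.mem_biUnion.2 ⟨n, ?_, hkB⟩
          have h1 : 1 ≤ (B n).card := Finset.card_pos.2 ⟨k, hkB⟩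
          have h2 := hBc n
          have h3 : n < 2^n := Nat.lt_two_pow_self
          rw [Finset.mem_range]
          have h4 : 2^(n+2) ≤ L := le_trans (Nat.le_mul_of_pos_right _ h1) h2
          rw [pow_add] at h4
          omega
        have hle := (Finset.card_le_card hsub).trans Finset.card_biUnion_le
        have hR : (∑ n ∈ Finset.range L, ((B n).card : ℝ)) ≤ L / 2 := by
          have hb : ∀ n, ((B n).card : ℝ) ≤ (L / 4) * (1/2)^n := by
            intro n
            have : ((2:ℝ)^(n+2) * (B n).card) ≤ L := by exact_mod_cast hBc n
            rw [pow_add] at this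
            rw [one_div, inv_pow, ← div_eq_mul_inv, le_div_iff₀ (by positivity)]
            linarith
          refine (Finset.sum_le_sum fun n _ => hb n).trans ?_
          rw [← Finset.mul_sum]
          have := Summable.sum_le_tsum (Finset.range L) (fun n _ => by positivity)
            summable_geometric_two
          rw [tsum_geometric_two] at this
          have hL : (0:ℝ) ≤ L := by positivity
          nlinarith
        have hR2 : 2 * (∑ n ∈ Finset.range L, (B n).card) ≤ L := by
          have : (2 * (∑ n ∈ Finset.range L, ((B n).card:ℝ))) ≤ L := by linarith
          exact_mod_cast this
        omega
      · intro k hk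
        rw [← (hcs p k).tsum_eq]
        exact tsum_congr hk

lemma aux_orbit {X : Type*} [TopologicalSpace X] (φ : X ≃ₜ X) (x : X) :
    zOrbit φ x = Set.range (fun k : ℤ => (φ^k) x) := by
  have h1 : ∀ n : ℕ, ∀ ψ : X ≃ₜ X, (ψ^n) x = (ψ : X → X)^[n] x := by
    intro n ψ
    induction n with
    | zero => rfl
    | succ n ih => rw [pow_succ', Homeomorph.mul_apply, ih, Function.iterate_succ_apply']
  have h2 : φ.symm = φ⁻¹ := rfl
  ext y
  constructor
  · rintro ⟨n, h | h⟩
    · exact ⟨n, by simp only [zpow_natCast]; rw [h, h1]⟩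
    · refine ⟨-n, ?_⟩
      simp only [zpow_neg, zpow_natCast]
      rw [h, ← h1, h2, inv_pow]
  · rintro ⟨k, rfl⟩
    obtain ⟨n, rfl | rfl⟩ := k.eq_nat_or_neg
    · exact ⟨n, Or.inl (by simp only [zpow_natCast]; rw [h1])⟩
    · refine ⟨n, Or.inr ?_⟩
      simp only [zpow_neg, zpow_natCast]
      rw [← h1, h2, inv_pow]

/-- Existence of the conformal measure from summability of the weights. -/
lemma aux_exists {X : Type*} [MetricSpace X] [CompactSpace X]
    [MeasurableSpace X] [BorelSpace X] (φ : X ≃ₜ X) (x : X) (F : X → ℝ) (hF : Continuous F)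
    (β : ℝ) (H : ℤ → ℝ) (hH : ∀ k, H (k+1) = H k + F ((φ^k) x))
    (hs : Summable fun k => Real.exp (β * H k)) :
    ∃ m : Measure X, IsConformalMeasure φ F β m ∧ m ((zOrbit φ x)ᶜ) = 0 := by
  let w : ℤ → ENNReal := fun k => ENNReal.ofReal (Real.exp (β * H k))
  let μ : Measure X := Measure.sum fun k => w k • Measure.dirac ((φ^k) x)
  let Z : ENNReal := ∑' k, w k
  have hZt : Z ≠ ⊤ := hs.tsum_ofReal_ne_top
  have hZ0 : Z ≠ 0 := by
    intro h
    have := ENNReal.tsum_eq_zero.1 h 0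
    simp only [w, ENNReal.ofReal_eq_zero] at this
    exact absurd this (not_le.2 (Real.exp_pos _))
  have hμ : ∀ B, MeasurableSet B → μ B = ∑' k, w k * B.indicator 1 ((φ^k) x) := by
    intro B hB
    simp only [μ]
    rw [Measure.sum_apply _ hB]
    simp [Measure.dirac_apply' _ hB]
  refine ⟨Z⁻¹ • μ, ⟨⟨?_⟩, ?_⟩, ?_⟩
  · rw [Measure.smul_apply, hμ _ MeasurableSet.univ]
    simp only [Set.indicator_univ, Pi.one_apply, mul_one, smul_eq_mul]
    exact ENNReal.inv_mul_cancel hZ0 hZt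
  · intro B hB
    have hB' : MeasurableSet (φ '' B) := φ.measurableEmbedding.measurableSet_image.2 hB
    rw [Measure.restrict_smul, lintegral_smul_measure, Measure.smul_apply, hμ _ hB']
    congr 1
    have hmeas : Measurable fun y => ENNReal.ofReal (Real.exp (β * F y)) := by fun_prop
    rw [← lintegral_indicator hB]
    simp only [μ]
    rw [lintegral_sum_measure, ← (Equiv.addRight (1:ℤ)).tsum_eq]
    refine tsum_congr fun k => ?_
    rw [lintegral_smul_measure, lintegral_dirac' _ (hmeas.indicator hB), smul_eq_mul,
      Equiv.coe_addRight]
    have e1 : (φ^(k+1)) x = φ ((φ^k) x) := by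
      rw [add_comm, zpow_add, zpow_one, Homeomorph.mul_apply]
    rw [e1]
    by_cases hk : (φ^k) x ∈ B
    · rw [Set.indicator_of_mem hk, Set.indicator_of_mem (Set.mem_image_of_mem _ hk)]
      simp only [w, hH k, mul_add, Real.exp_add]
      rw [ENNReal.ofReal_mul (Real.exp_pos _).le]; simp
    · have hk' : φ ((φ^k) x) ∉ φ '' B := by rwa [φ.injective.mem_set_image]
      rw [Set.indicator_of_notMem hk, Set.indicator_of_notMem hk', mul_zero, mul_zero]
  · have hc : (zOrbit φ x).Countable := by rw [aux_orbit]; exact Set.countable_range _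
    rw [Measure.smul_apply, hμ _ hc.measurableSet.compl]
    have : ∀ k, w k * (zOrbit φ x)ᶜ.indicator 1 ((φ^k) x) = 0 := by
      intro k
      rw [Set.indicator_of_notMem, mul_zero]
      rw [aux_orbit]; simp
    simp [this]

/-- Weights of a conformal measure on an orbit have bounded partial sums. -/
lemma aux_bound {X : Type*} [MetricSpace X] [CompactSpace X]
    [MeasurableSpace X] [BorelSpace X] (φ : X ≃ₜ X) (x : X) (F : X → ℝ)
    (hinj : Function.Injective fun k : ℤ => (φ^k) x)
    (β : ℝ) (H : ℤ → ℝ) (h0 : H 0 = 0) (hH : ∀ k, H (k+1) = H k + F ((φ^k) x))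
    (m : Measure X) (hm : IsConformalMeasure φ F β m) (hz : m ((zOrbit φ x)ᶜ) = 0) :
    ∃ C : ℝ, ∀ s : Finset ℕ, ∑ k ∈ s, Real.exp (β * H k) ≤ C := by
  obtain ⟨hprob, hconf⟩ := hm
  have hstep : ∀ k : ℤ, m {(φ^(k+1)) x} = ENNReal.ofReal (Real.exp (β * F ((φ^k) x))) * m {(φ^k) x} := by
    intro k
    have := hconf {(φ^k) x} (measurableSet_singleton _)
    rw [Set.image_singleton, lintegral_singleton] at this
    rw [← this, add_comm, zpow_add, zpow_one, Homeomorph.mul_apply]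
  have hw0 : m {(φ^(0:ℤ)) x} ≠ 0 := by
    intro hzero
    have hall : ∀ k : ℤ, m {(φ^k) x} = 0 := by
      intro k
      induction k using Int.induction_on with
      | zero => exact hzero
      | succ i ih => rw [hstep, ih, mul_zero]
      | pred i ih =>
        have h2 := hstep (-(i:ℤ) - 1)
        rw [sub_add_cancel, ih] at h2
        rcases mul_eq_zero.1 h2.symm with h3 | h3
        · exact absurd (ENNReal.ofReal_eq_zero.1 h3) (not_le.2 (Real.exp_pos _))
        · exact h3
    have horb : m (zOrbit φ x) = 0 := by
      rw [aux_orbit, ← Set.iUnion_singleton_eq_range]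
      exact measure_iUnion_null hall
    have huniv : m Set.univ = 0 := by
      rw [← Set.union_compl_self (zOrbit φ x)]
      exact measure_union_null horb hz
    rw [measure_univ] at huniv
    exact one_ne_zero huniv
  have hformula : ∀ k : ℕ, m.real {(φ^(k:ℤ)) x} = Real.exp (β * H k) * m.real {(φ^(0:ℤ)) x} := by
    intro k
    induction k with
    | zero => simp [h0]
    | succ k ih =>
      have h2 := congrArg ENNReal.toReal (hstep k)
      rw [ENNReal.toReal_mul, ENNReal.toReal_ofReal (Real.exp_pos _).le] at h2
      push_cast
      simp only [Measure.real] at ih ⊢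
      rw [h2, ih, hH, mul_add, Real.exp_add]; ring
  have hr : 0 < m.real {(φ^(0:ℤ)) x} :=
    ENNReal.toReal_pos hw0 (measure_ne_top _ _)
  refine ⟨1 / m.real {(φ^(0:ℤ)) x}, fun s => ?_⟩
  rw [le_div_iff₀ hr, Finset.sum_mul]
  simp_rw [← hformula]
  have hinj' : Function.Injective fun k : ℕ => (φ^(k:ℤ)) x :=
    hinj.comp Nat.cast_injective
  calc ∑ k ∈ s, m.real {(φ^(k:ℤ)) x} = ∑ y ∈ s.map ⟨_, hinj'⟩, m.real {y} := by
        rw [Finset.sum_map]; rfl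
    _ = m.real (s.map ⟨_, hinj'⟩ : Finset X) := sum_measureReal_singleton _
    _ ≤ 1 := measureReal_le_one

theorem stmt17 {X : Type*} [MetricSpace X] [CompactSpace X]
    [MeasurableSpace X] [BorelSpace X]
    (φ : X ≃ₜ X) (q : ℕ) (x : Fin q → X)
    (hnonper : ∀ p : Fin q, ∀ n : ℕ, 1 ≤ n → (φ : X → X)^[n] (x p) ≠ x p)
    (hdisj : ∀ p p' : Fin q, p ≠ p' → Disjoint (zOrbit φ (x p)) (zOrbit φ (x p')))
    (βp : Fin q → ℝ) (hβp : ∀ p, βp p < 0) (closed : Fin q → Bool) :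
    ∃ F : X → ℝ, Continuous F ∧
      (∀ p : Fin q, ∀ β : ℝ,
        (∃ m : Measure X, IsConformalMeasure φ F β m ∧ m ((zOrbit φ (x p))ᶜ) = 0) ↔
          β ∈ (if closed p then Set.Iic (βp p) else Set.Iio (βp p))) ∧
      (∀ ν : Measure X, IsProbabilityMeasure ν → IsInvariantMeasure φ ν →
        ∫ y, F y ∂ν = 0) := by
  classical
  have hpow : ∀ (n : ℕ) (y : X), (φ^(n:ℤ)) y = (φ : X → X)^[n] y := by
    intro n y
    rw [zpow_natCast]
    induction n with
    | zero => rfl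
    | succ n ih => rw [pow_succ', Homeomorph.mul_apply, ih, Function.iterate_succ_apply']
  have hnon : ∀ p (i j : ℤ), i < j → (φ^i) (x p) ≠ (φ^j) (x p) := by
    intro p i j hij heq
    have h1 := congrArg (φ^(-i)) heq
    rw [← Homeomorph.mul_apply, ← Homeomorph.mul_apply, ← zpow_add, ← zpow_add, neg_add_cancel,
      zpow_zero] at h1
    obtain ⟨n, hn⟩ := Int.eq_ofNat_of_zero_le (by omega : 0 ≤ -i + j)
    rw [hn, hpow] at h1
    exact hnonper p n (by omega) h1.symm
  have hinj : ∀ p p' (i j : ℤ), (φ^i) (x p) = (φ^j) (x p') → p = p' ∧ i = j := by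
    intro p p' i j heq
    have hp : p = p' := by
      by_contra hne
      have := hdisj p p' hne
      rw [aux_orbit, aux_orbit] at this
      exact Set.disjoint_left.1 this ⟨i, rfl⟩ ⟨j, heq.symm⟩
    subst hp
    refine ⟨rfl, ?_⟩
    rcases lt_trichotomy i j with h | h | h
    · exact absurd heq (hnon p i j h)
    · exact h
    · exact absurd heq.symm (hnon p j i h)
  choose g hgm hg0 hginc hgs using fun p => aux_g (βp p) (hβp p) (closed p)
  obtain ⟨F, hF, hint, hall⟩ := aux_F φ x hinj g hgm hg0 hginc
  refine ⟨F, hF, fun p β => ?_, hint⟩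
  obtain ⟨H, hH0, hHs, hHg, A, hA, hAg⟩ := hall p
  have hgnn : ∀ k, 0 ≤ g p k := fun k => hg0 p ▸ hgm p (Nat.zero_le k)
  constructor
  · rintro ⟨m, hm, hz⟩
    obtain ⟨C, hC⟩ := aux_bound φ (x p) F (fun i j h => (hinj p p i j h).2) β H hH0 hHs m hm hz
    have hneg : β < 0 := by
      by_contra hβ
      push Not at hβ
      obtain ⟨L, hL⟩ := exists_nat_gt C
      have h1 := hC (Finset.range L)
      have h2 : ∑ k ∈ Finset.range L, (1:ℝ) ≤ ∑ k ∈ Finset.range L, Real.exp (β * H k) :=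
        Finset.sum_le_sum fun k _ => Real.one_le_exp
          (mul_nonneg hβ ((hgnn _).trans (hHg k)))
      simp at h2
      linarith
    rw [← hgs p β hneg]
    refine aux_div _ ?_ (fun k => (Real.exp_pos _).le) A hA C fun L => ?_
    · intro a b hab
      exact Real.exp_le_exp.2 (mul_le_mul_of_nonpos_left (hgm p hab) hneg.le)
    · refine le_trans (le_of_eq (Finset.sum_congr rfl fun k hk => ?_)) (hC _)
      rw [hAg k (Finset.mem_filter.1 hk).2]
  · intro hβ
    have hneg : β < 0 := by
      have := hβp p
      split_ifs at hβ
      · exact lt_of_le_of_lt hβ this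
      · exact lt_trans hβ this
    have hs := (hgs p β hneg).2 hβ
    refine aux_exists φ (x p) F hF β H hHs ?_
    have hs2 : Summable fun k : ℤ => Real.exp (β * g p k.natAbs) :=
      Summable.of_nat_of_neg (by simpa using hs) (by simpa using hs)
    exact Summable.of_nonneg_of_le (fun k => (Real.exp_pos _).le)
      (fun k => Real.exp_le_exp.2 (mul_le_mul_of_nonpos_left (hHg k) hneg.le)) hs2
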